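/- There is no element z of the field L = ℚ(ζ₇ + ζ₇⁻¹) whose field norm N_{L/ℚ}(z) equals 4. -/

import Mathlib

noncomputable section

/-- `ζ₇ = e^{2πi/7}`, a primitive seventh root of unity in `ℂ`. -/
def zeta7 : ℂ := Complex.exp (2 * Real.pi * Complex.I / 7)

/-- `L = ℚ(ζ₇ + ζ₇⁻¹)`, the real subfield of `ℚ(ζ₇)` of degree 3 over `ℚ`. -/
def L7 : IntermediateField ℚ ℂ := IntermediateField.adjoin ℚ {zeta7 + zeta7⁻¹}

/-!
The minimal polynomial `X³ + X² - 2X - 1` of `ζ₇ + ζ₇⁻¹` stays irreducible modulo `2`, so `2` is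
inert in `L`. If a prime `p` is inert in a number field of degree `n`, every nonzero integer of the
field is `p ^ k * y` with `y` coprime to `p`; its norm is `p ^ (n * k)` times the norm of `y`, which
is again coprime to `p`. Hence `n` divides the `p`-adic valuation of every norm, whereas the
`2`-adic valuation of `4` is not divisible by `3`.
-/

open Polynomial IntermediateField NumberField

theorem isCoprime_of_isMaximal_span_of_not_dvd {A : Type*} [CommRing A] {a x : A}
    (ha : (Ideal.span {a}).IsMaximal) (hx : ¬ a ∣ x) : IsCoprime a x := by
  obtain ⟨y, i, hi, hyi⟩ := ha.exists_inv (mt Ideal.mem_span_singleton.mp hx)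
  obtain ⟨c, rfl⟩ := Ideal.mem_span_singleton.mp hi
  exact ⟨c, y, by linear_combination hyi⟩

theorem isField_of_irreducible_of_finrank_eq_natDegree {k A : Type*} [Field k] [CommRing A]
    [Algebra k A] {g : k[X]} (hg : Irreducible g) {a : A} (ha : aeval a g = 0)
    (hdeg : Module.finrank k A = g.natDegree) : IsField A := by
  have : Fact (Irreducible g) := ⟨hg⟩
  have hpos : 0 < Module.finrank k A := hdeg ▸ hg.natDegree_pos
  have : Nontrivial A := Module.nontrivial_of_finrank_pos hpos
  have : Module.Finite k A := Module.finite_of_finrank_pos hpos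
  have : Module.Finite k (AdjoinRoot g) := (AdjoinRoot.powerBasis hg.ne_zero).finite
  have hfinrank : Module.finrank k (AdjoinRoot g) = Module.finrank k A :=
    finrank_quotient_span_eq_natDegree.trans hdeg.symm
  let φ : AdjoinRoot g →ₐ[k] A := AdjoinRoot.liftAlgHom g (Algebra.ofId k A) a ha
  have hinj : Function.Injective φ := φ.toRingHom.injective
  have hsurj : Function.Surjective φ :=
    (LinearMap.injective_iff_surjective_of_finrank_eq_finrank (f := φ.toLinearMap) hfinrank).mp hinj
  exact (AlgEquiv.ofBijective φ ⟨hinj, hsurj⟩).symm.toMulEquiv.isField (Field.toIsField _)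

section NormMultiplicity

variable {R S : Type*} [CommRing R] [CommRing S] [Algebra R S] [Module.Free R S]

theorem norm_algebraMap_pow_mul (r : R) (k : ℕ) (y : S) :
    Algebra.norm R (algebraMap R S r ^ k * y) =
      r ^ (Module.finrank R S * k) * Algebra.norm R y := by
  rw [map_mul, map_pow, Algebra.norm_algebraMap, pow_mul]

variable [Module.Finite R S] {r : R}

theorem dvd_norm_one_add_smul_sub_one (r : R) (x : S) :
    r ∣ Algebra.norm R (1 + r • x) - 1 := by
  obtain ⟨c, hc⟩ := Algebra.norm_one_add_smul r x
  exact ⟨Algebra.trace R S x + c * r, by rw [hc]; ring⟩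

theorem isCoprime_norm_of_isCoprime_algebraMap {x : S} (h : IsCoprime (algebraMap R S r) x) :
    IsCoprime r (Algebra.norm R x) := by
  obtain ⟨a, b, hab⟩ := h
  have hbx : b * x = 1 + r • -a := by rw [Algebra.smul_def]; linear_combination hab
  obtain ⟨c, hc⟩ := dvd_norm_one_add_smul_sub_one r (-a)
  rw [← hbx, map_mul] at hc
  exact ⟨-c, Algebra.norm R b, by linear_combination hc⟩

theorem not_dvd_norm_of_isMaximal_span (hmax : (Ideal.span {algebraMap R S r}).IsMaximal)
    (hr : ¬ IsUnit r) {x : S} (hx : ¬ algebraMap R S r ∣ x) : ¬ r ∣ Algebra.norm R x := by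
  intro hdvd
  have hcop : IsCoprime r (Algebra.norm R x) := isCoprime_norm_of_isCoprime_algebraMap
    (isCoprime_of_isMaximal_span_of_not_dvd hmax hx)
  exact hr (hcop.isUnit_of_dvd' dvd_rfl hdvd)

theorem finiteMultiplicity_algebraMap_of_norm [Nontrivial S] {x : S}
    (hx : FiniteMultiplicity r (Algebra.norm R x)) :
    FiniteMultiplicity (algebraMap R S r) x := by
  have : Nontrivial R := (algebraMap R S).domain_nontrivial
  have hrank : 0 < Module.finrank R S := (Module.finrank_pos_iff_of_free R S).mpr inferInstance
  contrapose hx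
  refine FiniteMultiplicity.not_iff_forall.mpr fun k ↦ ?_
  obtain ⟨y, rfl⟩ := FiniteMultiplicity.not_iff_forall.mp hx k
  rw [norm_algebraMap_pow_mul]
  exact (pow_dvd_pow r (Nat.le_mul_of_pos_left k hrank)).mul_right _

theorem multiplicity_norm_of_isMaximal_span [IsDomain R] (hr : Prime r)
    (hmax : (Ideal.span {algebraMap R S r}).IsMaximal) {x : S}
    (hx : FiniteMultiplicity r (Algebra.norm R x)) :
    multiplicity r (Algebra.norm R x) =
      Module.finrank R S * multiplicity (algebraMap R S r) x := by
  have : Nontrivial S :=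
    not_subsingleton_iff_nontrivial.mp fun _ ↦ hmax.ne_top (Subsingleton.elim _ _)
  obtain ⟨y, hxy, hy⟩ :=
    (finiteMultiplicity_algebraMap_of_norm hx).exists_eq_pow_mul_and_not_dvd
  have hNy : ¬ r ∣ Algebra.norm R y := not_dvd_norm_of_isMaximal_span hmax hr.not_isUnit hy
  apply multiplicity_eq_of_emultiplicity_eq_some
  conv_lhs => rw [hxy, norm_algebraMap_pow_mul]
  rw [emultiplicity_mul hr, emultiplicity_pow_self hr.ne_zero hr.not_isUnit,
    emultiplicity_eq_zero.mpr hNy, add_zero]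

end NormMultiplicity

section InertPrime

variable {p : ℕ} [hp : Fact p.Prime]

section QuotientSpanPrime

variable {S : Type*} [CommRing S] [IsDedekindDomain S] [Module.Free ℤ S] [Module.Finite ℤ S]

theorem finrank_zmod_quotient_span_natCast [Algebra (ZMod p) (S ⧸ Ideal.span {(p : S)})] :
    Module.finrank (ZMod p) (S ⧸ Ideal.span {(p : S)}) = Module.finrank ℤ S := by
  have hcard : Nat.card (S ⧸ Ideal.span {(p : S)}) = p ^ Module.finrank ℤ S :=
    Ideal.absNorm_span_natCast p
  have : Finite (S ⧸ Ideal.span {(p : S)}) :=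
    Nat.finite_of_card_ne_zero (hcard ▸ pow_ne_zero _ hp.out.ne_zero)
  rw [Module.natCard_eq_pow_finrank (K := ZMod p), Nat.card_zmod] at hcard
  exact Nat.pow_right_injective hp.out.two_le hcard

-- `S ⧸ (p)` contains a copy of `𝔽_p[X] / (f)` of the same dimension over `𝔽_p`; this is why `S`
-- may be larger than `ℤ[α]`.
theorem isMaximal_span_natCast_of_irreducible_map {f : ℤ[X]} (hf : f.Monic)
    (hirr : Irreducible (f.map (Int.castRingHom (ZMod p)))) {α : S} (hα : aeval α f = 0)
    (hdeg : Module.finrank ℤ S = f.natDegree) : (Ideal.span {(p : S)}).IsMaximal := by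
  have hp_zero : (p : S ⧸ Ideal.span {(p : S)}) = 0 :=
    Ideal.Quotient.eq_zero_iff_mem.mpr (Ideal.mem_span_singleton_self (p : S))
  let : Algebra (ZMod p) (S ⧸ Ideal.span {(p : S)}) := ZMod.algebra' _ _ (ringChar.dvd hp_zero)
  have hroot : aeval (algebraMap S (S ⧸ Ideal.span {(p : S)}) α)
      (f.map (algebraMap ℤ (ZMod p))) = 0 := by
    rw [aeval_map_algebraMap, aeval_algebraMap_apply, hα, map_zero]
  refine Ideal.Quotient.maximal_of_isField _
    (isField_of_irreducible_of_finrank_eq_natDegree hirr hroot ?_)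
  rw [finrank_zmod_quotient_span_natCast, hdeg, hf.natDegree_map]

end QuotientSpanPrime

theorem finrank_dvd_padicValInt_norm {S : Type*} [CommRing S] [Module.Free ℤ S]
    [Module.Finite ℤ S] (hmax : (Ideal.span {(p : S)}).IsMaximal) (x : S) :
    Module.finrank ℤ S ∣ padicValInt p (Algebra.norm ℤ x) := by
  by_cases hx : Algebra.norm ℤ x = 0
  · simp [hx]
  have hprime : Prime (p : ℤ) := Nat.prime_iff_prime_int.mp hp.out
  rw [padicValInt.of_ne_one_ne_zero hp.out.ne_one hx,
    multiplicity_norm_of_isMaximal_span hprime (by simpa using hmax)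
      (padicValRat.finite_int_prime_iff.mpr hx)]
  exact dvd_mul_right _ _

theorem finrank_dvd_padicValRat_norm {K : Type*} [Field K] [NumberField K]
    (hmax : (Ideal.span {(p : 𝓞 K)}).IsMaximal) (z : K) :
    (Module.finrank ℚ K : ℤ) ∣ padicValRat p (Algebra.norm ℚ z) := by
  by_cases hz : z = 0
  · simp [hz]
  have hz_alg : IsAlgebraic ℤ z :=
    (IsFractionRing.isAlgebraic_iff ℤ ℚ K).mpr (Algebra.IsAlgebraic.isAlgebraic z)
  obtain ⟨m, x, hm, hx⟩ := hz_alg.exists_nsmul_eq (𝓞 K)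
  have hnorm : (Algebra.norm ℤ x : ℚ) = (m : ℚ) ^ Module.finrank ℚ K * Algebra.norm ℚ z := by
    rw [Algebra.coe_norm_int, RingOfIntegers.coe_eq_algebraMap, ← hx, nsmul_eq_mul, map_mul,
      Algebra.norm_natCast]
  have hval : (padicValInt p (Algebra.norm ℤ x) : ℤ) =
      Module.finrank ℚ K * padicValRat p m + padicValRat p (Algebra.norm ℚ z) := by
    rw [← padicValRat.of_int, hnorm, padicValRat.mul (by simp [hm]) (by simpa using hz),
      padicValRat.pow]
  have hdvd := finrank_dvd_padicValInt_norm hmax x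
  rw [RingOfIntegers.rank, ← Int.natCast_dvd_natCast, hval] at hdvd
  exact (dvd_add_right (dvd_mul_right _ _)).mp hdvd

variable {E : Type*} [Field E] [CharZero E] {f : ℤ[X]} {α : E}

theorem minpoly_rat_eq_map_of_irreducible_map_zmod (hf : f.Monic)
    (hirr : Irreducible (f.map (Int.castRingHom (ZMod p)))) (hα : aeval α f = 0) :
    minpoly ℚ α = f.map (algebraMap ℤ ℚ) := by
  have hirrℚ : Irreducible (f.map (algebraMap ℤ ℚ)) :=
    hf.irreducible_iff_irreducible_map_fraction_map.mp
      (hf.irreducible_of_irreducible_map _ _ hirr)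
  exact (minpoly.eq_of_irreducible_of_monic hirrℚ (by rwa [aeval_map_algebraMap]) (hf.map _)).symm

theorem natDegree_dvd_padicValRat_norm_adjoin (hf : f.Monic)
    (hirr : Irreducible (f.map (Int.castRingHom (ZMod p)))) (hα : aeval α f = 0) (z : ℚ⟮α⟯) :
    (f.natDegree : ℤ) ∣ padicValRat p (Algebra.norm ℚ z) := by
  have hint : IsIntegral ℚ α := IsIntegral.tower_top (R := ℤ) ⟨f, hf, hα⟩
  have hdeg : Module.finrank ℚ ℚ⟮α⟯ = f.natDegree := by
    rw [adjoin.finrank hint, minpoly_rat_eq_map_of_irreducible_map_zmod hf hirr hα,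
      hf.natDegree_map]
  have : FiniteDimensional ℚ ℚ⟮α⟯ := adjoin.finiteDimensional hint
  have : NumberField ℚ⟮α⟯ := ⟨⟩
  have hgen : aeval (AdjoinSimple.gen ℚ α) f = 0 := by
    apply FaithfulSMul.algebraMap_injective ℚ⟮α⟯ E
    rw [← aeval_algebraMap_apply, AdjoinSimple.algebraMap_gen, hα, map_zero]
  let β : 𝓞 ℚ⟮α⟯ := ⟨AdjoinSimple.gen ℚ α, f, hf, hgen⟩
  have hβ : aeval β f = 0 := (aeval_algebraMap_eq_zero_iff ℚ⟮α⟯ β f).mp hgen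
  rw [← hdeg]
  exact finrank_dvd_padicValRat_norm (isMaximal_span_natCast_of_irreducible_map hf hirr hβ
    ((RingOfIntegers.rank _).trans hdeg)) z

end InertPrime

/-- The minimal polynomial of `ζ₇ + ζ₇⁻¹`, kept over `ℤ` so that it can be reduced modulo `2`. -/
def realCyclotomicSeven : ℤ[X] := X ^ 3 + X ^ 2 - 2 * X - 1

theorem natDegree_realCyclotomicSeven : realCyclotomicSeven.natDegree = 3 := by
  unfold realCyclotomicSeven
  compute_degree!

theorem monic_realCyclotomicSeven : realCyclotomicSeven.Monic := by
  unfold realCyclotomicSeven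
  monicity!

theorem irreducible_realCyclotomicSeven_map_zmod_two :
    Irreducible (realCyclotomicSeven.map (Int.castRingHom (ZMod 2))) := by
  have hdeg : (realCyclotomicSeven.map (Int.castRingHom (ZMod 2))).natDegree = 3 := by
    rw [monic_realCyclotomicSeven.natDegree_map, natDegree_realCyclotomicSeven]
  have no_root : ∀ x : ZMod 2, x ^ 3 + x ^ 2 - 2 * x - 1 ≠ 0 := by decide
  rw [irreducible_iff_roots_eq_zero_of_degree_le_three (by rw [hdeg]; norm_num) hdeg.le,
    Multiset.eq_zero_iff_forall_notMem]
  intro x hx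
  exact no_root x (by simpa [realCyclotomicSeven] using (mem_roots'.mp hx).2)

theorem aeval_add_inv_realCyclotomicSeven {F : Type*} [Field F] {ζ : F} (hζ : IsPrimitiveRoot ζ 7) :
    aeval (ζ + ζ⁻¹) realCyclotomicSeven = 0 := by
  have hgeom : ∑ i ∈ Finset.range 7, ζ ^ i = 0 := hζ.geom_sum_eq_zero (by norm_num)
  have hζ0 : ζ ≠ 0 := hζ.ne_zero (by norm_num)
  simp only [Finset.sum_range_succ, Finset.sum_range_zero] at hgeom
  simp only [realCyclotomicSeven, map_sub, map_add, map_mul, map_pow, aeval_X, map_ofNat, map_one]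
  field_simp
  linear_combination hgeom

theorem isPrimitiveRoot_zeta7 : IsPrimitiveRoot zeta7 7 :=
  Complex.isPrimitiveRoot_exp 7 (by norm_num)

/-- No element of `L = ℚ(ζ₇ + ζ₇⁻¹)` has field norm `N_{L/ℚ}` equal
to `4`. -/
theorem no_element_of_norm_four : ¬ ∃ z : L7, Algebra.norm ℚ z = 4 := by
  rintro ⟨z, hz⟩
  have hdvd : (realCyclotomicSeven.natDegree : ℤ) ∣ padicValRat 2 (Algebra.norm ℚ z) :=
    natDegree_dvd_padicValRat_norm_adjoin monic_realCyclotomicSeven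
      irreducible_realCyclotomicSeven_map_zmod_two
      (aeval_add_inv_realCyclotomicSeven isPrimitiveRoot_zeta7) z
  have hval : padicValRat 2 4 = 2 := by
    rw [show (4 : ℚ) = (2 : ℕ) ^ 2 by norm_num, padicValRat.pow, padicValRat.self one_lt_two]
    norm_num
  rw [hz, hval, natDegree_realCyclotomicSeven] at hdvd
  norm_num at hdvd

end
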